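/- Up to isometries of ℝ², there are exactly four cyclic lattice equable quadrilaterals. Every lattice equable quadrilateral whose four vertices lie on a common circle can be mapped by an isometry of ℝ² onto one of: the square with vertices (0,0), (4,0), (4,4), (0,4); the rectangle with vertices (0,0), (6,0), (6,3), (0,3); the isosceles trapezoid with vertices (0,0), (8,0), (5,4), (3,4); the isosceles trapezoid with vertices (0,0), (14,0), (10,3), (4,3). -/

import Mathlib

noncomputable section

/-- Euclidean distance between two points of `ℝ × ℝ`. -/
def dist2 (p q : ℝ × ℝ) : ℝ := Real.sqrt ((p.1 - q.1) ^ 2 + (p.2 - q.2) ^ 2)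

/-- Signed cross product of the vectors `q - p` and `r - p`. -/
def cross (p q r : ℝ × ℝ) : ℝ :=
  (q.1 - p.1) * (r.2 - p.2) - (q.2 - p.2) * (r.1 - p.1)

/-- Three points are collinear. -/
def Collinear3 (p q r : ℝ × ℝ) : Prop := cross p q r = 0

/-- Dot product on `ℝ × ℝ`. -/
def dot2 (p q : ℝ × ℝ) : ℝ := p.1 * q.1 + p.2 * q.2

/-- Closed segment between two points. -/
def Seg (p q : ℝ × ℝ) : Set (ℝ × ℝ) :=
  {x | ∃ t : ℝ, 0 ≤ t ∧ t ≤ 1 ∧ x = (1 - t) • p + t • q}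

/-- Twice the signed (shoelace) area of the quadrilateral `O A B C`. -/
def shoelace (O A B C : ℝ × ℝ) : ℝ :=
  (O.1 * A.2 - A.1 * O.2) + (A.1 * B.2 - B.1 * A.2) +
    (B.1 * C.2 - C.1 * B.2) + (C.1 * O.2 - O.1 * C.2)

/-- Area of the (simple) quadrilateral `O A B C`, by the shoelace formula. -/
def quadArea (O A B C : ℝ × ℝ) : ℝ := |shoelace O A B C| / 2

/-- Perimeter of the quadrilateral `O A B C`. -/
def quadPerim (O A B C : ℝ × ℝ) : ℝ :=
  dist2 O A + dist2 A B + dist2 B C + dist2 C O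

/-- Simple quadrilateral: no three vertices collinear, and the four closed sides
intersect only at shared endpoints. -/
def IsSimpleQuad (O A B C : ℝ × ℝ) : Prop :=
  ¬ Collinear3 O A B ∧ ¬ Collinear3 A B C ∧ ¬ Collinear3 B C O ∧ ¬ Collinear3 C O A ∧
  Seg O A ∩ Seg B C = ∅ ∧ Seg A B ∩ Seg C O = ∅ ∧
  Seg O A ∩ Seg A B = {A} ∧ Seg A B ∩ Seg B C = {B} ∧
  Seg B C ∩ Seg C O = {C} ∧ Seg C O ∩ Seg O A = {O}

/-- Quadrilateral `O A B C`: simple, with vertices in counterclockwise order. -/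
def IsQuad (O A B C : ℝ × ℝ) : Prop :=
  IsSimpleQuad O A B C ∧ 0 < shoelace O A B C

/-- A point of `ℝ × ℝ` with integer coordinates. -/
def IsLatticePt (p : ℝ × ℝ) : Prop := ∃ m n : ℤ, p = ((m : ℝ), (n : ℝ))

/-- An isometry of the Euclidean plane `ℝ × ℝ`. -/
def IsIsometry2 (f : ℝ × ℝ → ℝ × ℝ) : Prop :=
  Function.Bijective f ∧ ∀ p q, dist2 (f p) (f q) = dist2 p q

/-- The four vertices are in convex position: no vertex lies in the convex hull
of the other three. -/
def ConvexPos (O A B C : ℝ × ℝ) : Prop :=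
  O ∉ convexHull ℝ ({A, B, C} : Set (ℝ × ℝ)) ∧
  A ∉ convexHull ℝ ({O, B, C} : Set (ℝ × ℝ)) ∧
  B ∉ convexHull ℝ ({O, A, C} : Set (ℝ × ℝ)) ∧
  C ∉ convexHull ℝ ({O, A, B} : Set (ℝ × ℝ))

/-- The segment `pq` is parallel to the segment `rs`. -/
def Para (p q r s : ℝ × ℝ) : Prop :=
  (q.1 - p.1) * (s.2 - r.2) - (q.2 - p.2) * (s.1 - r.1) = 0

/-- Area of the triangle `p q r`. -/
def triArea (p q r : ℝ × ℝ) : ℝ := |cross p q r| / 2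

/-- Heron's formula: area of a triangle with side lengths `p`, `q`, `r`. -/
def heronArea (p q r : ℝ) : ℝ :=
  Real.sqrt ((p + q + r) * (-p + q + r) * (p - q + r) * (p + q - r)) / 4

end

/-! ### Rationality of the side lengths -/

/-- Conjugation `a ↦ -a` for a quartic with rational coefficients. -/
lemma quartic_conj (a : ℝ) (n m t e0 e1 e2 e3 e4 : ℚ) (ha : a ^ 2 = n) (hirr : Irrational a)
    (h : (e0 : ℝ) + e1 * (m - t * a) + e2 * (m - t * a) ^ 2 + e3 * (m - t * a) ^ 3
      + e4 * (m - t * a) ^ 4 = 0) :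
    (e0 : ℝ) + e1 * (m + t * a) + e2 * (m + t * a) ^ 2 + e3 * (m + t * a) ^ 3
      + e4 * (m + t * a) ^ 4 = 0 := by
  obtain ⟨U, hU⟩ : ∃ U : ℚ, U = e0 + e1 * m + e2 * (m ^ 2 + t ^ 2 * n)
      + e3 * (m ^ 3 + 3 * m * t ^ 2 * n)
      + e4 * (m ^ 4 + 6 * m ^ 2 * t ^ 2 * n + t ^ 4 * n ^ 2) := ⟨_, rfl⟩
  obtain ⟨V, hV⟩ : ∃ V : ℚ, V = e1 * t + e2 * (2 * m * t)
      + e3 * (3 * m ^ 2 * t + t ^ 3 * n)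
      + e4 * (4 * m ^ 3 * t + 4 * m * t ^ 3 * n) := ⟨_, rfl⟩
  have hU' := congrArg (fun x : ℚ => (x : ℝ)) hU
  have hV' := congrArg (fun x : ℚ => (x : ℝ)) hV
  push_cast at hU' hV'
  rw [← ha] at hU' hV'
  have h1 : (U : ℝ) - V * a = 0 := by
    rw [hU', hV']; linear_combination h
  have hV0 : V = 0 := by
    by_contra hne
    apply hirr
    refine ⟨U / V, ?_⟩
    have : (V : ℝ) ≠ 0 := by exact_mod_cast hne
    push_cast
    field_simp
    linarith
  have hU0 : (U : ℝ) = 0 := by rw [hV0] at h1; simpa using h1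
  have hV0' : (V : ℝ) = 0 := by exact_mod_cast hV0
  have h2 : (U : ℝ) + V * a = 0 := by rw [hU0, hV0']; ring
  rw [hU', hV'] at h2
  linear_combination h2

lemma not_irr (a b c d : ℝ) (na nb nc nd q : ℚ) (ha : a ^ 2 = na) (hb : b ^ 2 = nb)
    (hc : c ^ 2 = nc) (hd : d ^ 2 = nd) (a0 : 0 ≤ a) (b0 : 0 ≤ b) (c0 : 0 ≤ c) (d0 : 0 ≤ d)
    (h : a + b + c + d = q) : ¬ Irrational a := by
  intro hirr
  have apos : 0 < a := lt_of_le_of_ne a0 (fun h0 => hirr ⟨0, by simpa using h0⟩)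
  have key := quartic_conj a na (q ^ 2 + na) (2 * q)
    (((nb - nc - nd) ^ 2 - 4 * nc * nd) ^ 2)
    (2 * ((nb - nc - nd) ^ 2 - 4 * nc * nd) * (2 * (nb - nc - nd) + 4 * nb)
      - 16 * nb * (nb - nc - nd) ^ 2)
    ((2 * (nb - nc - nd) + 4 * nb) ^ 2 + 2 * ((nb - nc - nd) ^ 2 - 4 * nc * nd)
      - 32 * nb * (nb - nc - nd))
    (2 * (2 * (nb - nc - nd) + 4 * nb) - 16 * nb) 1 ha hirr
  push_cast at key
  rw [← ha, ← hb, ← hc, ← hd, ← h] at key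
  have h2 := key (by ring)
  have h3 : ((a + b + c + d) + a - b - c - d) * ((a + b + c + d) + a - b - c + d)
      * ((a + b + c + d) + a - b + c - d) * ((a + b + c + d) + a - b + c + d)
      * ((a + b + c + d) + a + b - c - d) * ((a + b + c + d) + a + b - c + d)
      * ((a + b + c + d) + a + b + c - d) * ((a + b + c + d) + a + b + c + d) = 0 := by
    rw [← h2]; ring
  have h4 : 0 < ((a + b + c + d) + a - b - c - d) * ((a + b + c + d) + a - b - c + d)
      * ((a + b + c + d) + a - b + c - d) * ((a + b + c + d) + a - b + c + d)
      * ((a + b + c + d) + a + b - c - d) * ((a + b + c + d) + a + b - c + d)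
      * ((a + b + c + d) + a + b + c - d) * ((a + b + c + d) + a + b + c + d) := by
    have p1 : 0 < (a + b + c + d) + a - b - c - d := by linarith
    have p2 : 0 < (a + b + c + d) + a - b - c + d := by linarith
    have p3 : 0 < (a + b + c + d) + a - b + c - d := by linarith
    have p4 : 0 < (a + b + c + d) + a - b + c + d := by linarith
    have p5 : 0 < (a + b + c + d) + a + b - c - d := by linarith
    have p6 : 0 < (a + b + c + d) + a + b - c + d := by linarith
    have p7 : 0 < (a + b + c + d) + a + b + c - d := by linarith
    have p8 : 0 < (a + b + c + d) + a + b + c + d := by linarith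
    exact mul_pos (mul_pos (mul_pos (mul_pos (mul_pos (mul_pos (mul_pos p1 p2) p3) p4) p5) p6) p7) p8
  linarith

/-- A nonnegative real with integer square, which is not irrational, is an integer. -/
lemma int_of_sq (a : ℝ) (n : ℤ) (ha : a ^ 2 = n) (h : ¬ Irrational a) :
    ∃ m : ℤ, a = m := by
  by_contra hne
  apply h
  apply irrational_nrt_of_notint_nrt 2 n (by exact_mod_cast ha) _ (by norm_num)
  exact hne

/-! ### The Diophantine equation -/

set_option maxHeartbeats 4000000 in
lemma dio_sorted (w x y z : ℤ) (hz : 0 < z) (hyz : z ≤ y) (hxy : y ≤ x) (hwx : x ≤ w)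
    (hw : w < x + y + z) (h : w * x * y * z = (w + x + y + z) ^ 2) :
    (w = 4 ∧ x = 4 ∧ y = 4 ∧ z = 4) ∨ (w = 6 ∧ x = 6 ∧ y = 3 ∧ z = 3) ∨
    (w = 8 ∧ x = 5 ∧ y = 5 ∧ z = 2) ∨ (w = 10 ∧ x = 10 ∧ y = 9 ∧ z = 1) := by
  have hy : 0 < y := by linarith
  have hx : 0 < x := by linarith
  have hw0 : 0 < w := by linarith
  have h1 : x * x * (y * z) ≤ (2 * x + (y + z)) ^ 2 := by
    have hd : 0 ≤ (w - x) * ((x + y + z) ^ 2 - w * x) := by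
      apply mul_nonneg (by linarith)
      nlinarith
    have : w * (x * x * (y * z)) ≤ w * (2 * x + (y + z)) ^ 2 := by
      have e : w * (x * x * (y * z)) = x * (w + x + y + z) ^ 2 := by rw [← h]; ring
      rw [e]; nlinarith
    exact le_of_mul_le_mul_left this hw0
  have h2 : 4 * (x + (y + z)) < x * (y * z) := by
    have : w * (4 * (x + (y + z))) < w * (x * (y * z)) := by
      have e : w * (x * (y * z)) = (w + x + y + z) ^ 2 := by rw [← h]; ring
      rw [e]
      have : 0 < (x + y + z - w) ^ 2 := by apply pow_pos; linarith
      nlinarith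
    exact lt_of_mul_lt_mul_left this hw0.le
  have h3 : y * z ≤ 16 := by
    have : x * x * (y * z) ≤ x * x * 16 := by nlinarith
    exact le_of_mul_le_mul_left this (by positivity)
  have hz4 : z ≤ 4 := by nlinarith
  have hy16 : y ≤ 16 := by nlinarith
  have hx25 : x ≤ 25 := by
    by_contra hc
    push Not at hc
    have h5 : 5 ≤ y * z := by nlinarith
    interval_cases z <;> interval_cases y <;> first | omega | nlinarith
  interval_cases z <;> interval_cases y <;> first
    | omega
    | (exfalso; nlinarith)
    | (interval_cases x <;> first
        | omega
        | (have hwu : w ≤ 50 := by omega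
           interval_cases w <;> omega))

lemma dio_num (a b c d : ℤ) (ha : 0 < a) (hb : 0 < b) (hc : 0 < c) (hd : 0 < d)
    (hba : b ≤ a) (hca : c ≤ a) (hda : d ≤ a)
    (hB : (b + c + d - a) * (a + c + d - b) * (a + b + d - c) * (a + b + c - d)
      = 16 * (a + b + c + d) ^ 2) :
    (a = 4 ∧ b = 4 ∧ c = 4 ∧ d = 4) ∨
    (a = 6 ∧ ((b = 3 ∧ c = 6 ∧ d = 3) ∨ (b = 3 ∧ c = 3 ∧ d = 6) ∨ (b = 6 ∧ c = 3 ∧ d = 3))) ∨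
    (a = 8 ∧ ((b = 5 ∧ c = 2 ∧ d = 5) ∨ (b = 5 ∧ c = 5 ∧ d = 2) ∨ (b = 2 ∧ c = 5 ∧ d = 5))) ∨
    (a = 14 ∧ ((b = 5 ∧ c = 6 ∧ d = 5) ∨ (b = 5 ∧ c = 5 ∧ d = 6) ∨ (b = 6 ∧ c = 5 ∧ d = 5))) := by
  obtain ⟨s, hs | hs⟩ := Int.even_or_odd' (a + b + c + d)
  · obtain ⟨w, hw⟩ : ∃ w, w = s - a := ⟨_, rfl⟩
    obtain ⟨x, hx⟩ : ∃ x, x = s - b := ⟨_, rfl⟩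
    obtain ⟨y, hy⟩ : ∃ y, y = s - c := ⟨_, rfl⟩
    obtain ⟨z, hz⟩ : ∃ z, z = s - d := ⟨_, rfl⟩
    have e1 : b + c + d - a = 2 * w := by omega
    have e2 : a + c + d - b = 2 * x := by omega
    have e3 : a + b + d - c = 2 * y := by omega
    have e4 : a + b + c - d = 2 * z := by omega
    have e5 : a + b + c + d = w + x + y + z := by omega
    rw [e1, e2, e3, e4, e5] at hB
    have hB' : w * x * y * z = (w + x + y + z) ^ 2 := by linarith
    have hx0 : 0 < x := by omega
    have hy0 : 0 < y := by omega
    have hz0 : 0 < z := by omega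
    have hw0 : 0 < w := by
      have : 0 < w * (x * y * z) := by
        have : 0 < (w + x + y + z) ^ 2 := by apply pow_pos; omega
        linarith
      exact pos_of_mul_pos_left this (by positivity)
    have fin : ∀ X Y Z : ℤ, X ≥ Y → Y ≥ Z → Z ≥ w → X < Y + Z + w → X * Y * Z * w
        = (X + Y + Z + w) ^ 2 → 
        (X = 4 ∧ Y = 4 ∧ Z = 4 ∧ w = 4) ∨ (X = 6 ∧ Y = 6 ∧ Z = 3 ∧ w = 3) ∨
        (X = 8 ∧ Y = 5 ∧ Z = 5 ∧ w = 2) ∨ (X = 10 ∧ Y = 10 ∧ Z = 9 ∧ w = 1) :=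
      fun X Y Z g1 g2 g3 g4 g5 => dio_sorted X Y Z w hw0 g3 g2 g1 g4 g5
    have all : ∃ X Y Z : ℤ, ((X = x ∧ Y = y ∧ Z = z) ∨ (X = x ∧ Y = z ∧ Z = y) ∨
        (X = y ∧ Y = x ∧ Z = z) ∨ (X = y ∧ Y = z ∧ Z = x) ∨ (X = z ∧ Y = x ∧ Z = y) ∨
        (X = z ∧ Y = y ∧ Z = x)) ∧ X ≥ Y ∧ Y ≥ Z := by
      rcases le_total x y with h | h <;> rcases le_total y z with h' | h' <;>
        rcases le_total x z with h'' | h''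
      · exact ⟨z, y, x, by simp, by omega, by omega⟩
      · exact ⟨z, y, x, by simp, by omega, by omega⟩
      · exact ⟨y, z, x, by simp, by omega, by omega⟩
      · exact ⟨y, x, z, by simp, by omega, by omega⟩
      · exact ⟨z, x, y, by simp, by omega, by omega⟩
      · exact ⟨x, z, y, by simp, by omega, by omega⟩
      · exact ⟨x, y, z, by simp, by omega, by omega⟩
      · exact ⟨x, y, z, by simp, by omega, by omega⟩
    obtain ⟨X, Y, Z, hp, g1, g2⟩ := all
    have g5 : X * Y * Z * w = (X + Y + Z + w) ^ 2 := by
      rcases hp with ⟨rfl, rfl, rfl⟩ | ⟨rfl, rfl, rfl⟩ | ⟨rfl, rfl, rfl⟩ | ⟨rfl, rfl, rfl⟩ |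
        ⟨rfl, rfl, rfl⟩ | ⟨rfl, rfl, rfl⟩ <;> linear_combination hB'
    have hf := fin X Y Z g1 g2 (by omega) (by omega) g5
    have hsum : X + Y + Z + w = 2 * s := by omega
    clear fin g5 hB hB'
    rcases hf with ⟨q1, q2, q3, q4⟩ | ⟨q1, q2, q3, q4⟩ | ⟨q1, q2, q3, q4⟩ | ⟨q1, q2, q3, q4⟩
    · left; omega
    · have hs' : s = 9 := by omega
      have ha' : a = 6 := by omega
      refine Or.inr (Or.inl ⟨ha', ?_⟩)
      clear hba hca hda hs e1 e2 e3 e4 e5 hx0 hy0 hz0 hw0 g1 g2 hsum ha hb hc hd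
      rcases hp with ⟨r1, r2, r3⟩ | ⟨r1, r2, r3⟩ | ⟨r1, r2, r3⟩ | ⟨r1, r2, r3⟩ |
        ⟨r1, r2, r3⟩ | ⟨r1, r2, r3⟩ <;> omega
    · have hs' : s = 10 := by omega
      have ha' : a = 8 := by omega
      refine Or.inr (Or.inr (Or.inl ⟨ha', ?_⟩))
      clear hba hca hda hs e1 e2 e3 e4 e5 hx0 hy0 hz0 hw0 g1 g2 hsum ha hb hc hd
      rcases hp with ⟨r1, r2, r3⟩ | ⟨r1, r2, r3⟩ | ⟨r1, r2, r3⟩ | ⟨r1, r2, r3⟩ |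
        ⟨r1, r2, r3⟩ | ⟨r1, r2, r3⟩ <;> omega
    · have hs' : s = 15 := by omega
      have ha' : a = 14 := by omega
      refine Or.inr (Or.inr (Or.inr ⟨ha', ?_⟩))
      clear hba hca hda hs e1 e2 e3 e4 e5 hx0 hy0 hz0 hw0 g1 g2 hsum ha hb hc hd
      rcases hp with ⟨r1, r2, r3⟩ | ⟨r1, r2, r3⟩ | ⟨r1, r2, r3⟩ | ⟨r1, r2, r3⟩ |
        ⟨r1, r2, r3⟩ | ⟨r1, r2, r3⟩ <;> omega
  · exfalso
    have hodd : Odd ((b + c + d - a) * (a + c + d - b) * (a + b + d - c) * (a + b + c - d)) := by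
      refine Odd.mul (Odd.mul (Odd.mul ?_ ?_) ?_) ?_
      · exact ⟨s - a, by omega⟩
      · exact ⟨s - b, by omega⟩
      · exact ⟨s - c, by omega⟩
      · exact ⟨s - d, by omega⟩
    rw [hB] at hodd
    obtain ⟨t, ht⟩ := hodd
    omega

lemma dio (a b c d k1 k4 : ℤ) (ha : 0 < a) (hb : 0 < b) (hc : 0 < c) (hd : 0 < d)
    (hba : b ≤ a) (hca : c ≤ a) (hda : d ≤ a)
    (hB : (b + c + d - a) * (a + c + d - b) * (a + b + d - c) * (a + b + c - d)
      = 16 * (a + b + c + d) ^ 2)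
    (h1 : k1 * (a * b + c * d) = 2 * (a + b + c + d) * (a * b))
    (h4 : k4 * (a * d + b * c) = 2 * (a + b + c + d) * (a * d)) :
    (a = 4 ∧ b = 4 ∧ c = 4 ∧ d = 4) ∨ (a = 6 ∧ b = 3 ∧ c = 6 ∧ d = 3) ∨
    (a = 8 ∧ b = 5 ∧ c = 2 ∧ d = 5) ∨ (a = 14 ∧ b = 5 ∧ c = 6 ∧ d = 5) := by
  rcases dio_num a b c d ha hb hc hd hba hca hda hB with h | ⟨h, h' | h' | h'⟩ |
    ⟨h, h' | h' | h'⟩ | ⟨h, h' | h' | h'⟩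
  · exact Or.inl h
  all_goals
    obtain ⟨rfl, rfl, rfl⟩ := h'
    subst h
    norm_num at h1 h4 ⊢
    try omega

/-! ### Geometry of a cyclic quadrilateral, algebraically -/

lemma cyc_alg (a b c d e1 k1 e2 k2 : ℤ) (ha : 0 < a) (hb : 0 < b) (hc : 0 < c) (hd : 0 < d)
    (k1p : 0 < k1) (k2p : 0 < k2) (h1 : e1 ^ 2 + k1 ^ 2 = a ^ 2 * b ^ 2)
    (h2 : e2 ^ 2 + k2 ^ 2 = c ^ 2 * d ^ 2) (h3 : e1 * k2 + e2 * k1 = 0)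
    (h4 : a ^ 2 + b ^ 2 - 2 * e1 = c ^ 2 + d ^ 2 - 2 * e2)
    (h5 : k1 + k2 = 2 * (a + b + c + d)) :
    k1 * (a * b + c * d) = 2 * (a + b + c + d) * (a * b) ∧
    2 * e1 * (a * b + c * d) = a * b * (a ^ 2 + b ^ 2 - c ^ 2 - d ^ 2) := by
  have hs : (k1 * (c * d)) ^ 2 = (k2 * (a * b)) ^ 2 := by
    linear_combination (-k1 ^ 2) * h2 + k2 ^ 2 * h1 + (e2 * k1 - e1 * k2) * h3
  have hk : k1 * (c * d) = k2 * (a * b) := by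
    have p1 : 0 ≤ k1 * (c * d) := by positivity
    have p2 : 0 ≤ k2 * (a * b) := by positivity
    exact (sq_eq_sq₀ p1 p2).1 hs
  have he : e1 * (c * d) + e2 * (a * b) = 0 := by
    have : k1 * (e1 * (c * d) + e2 * (a * b)) = 0 := by
      linear_combination e1 * hk + a * b * h3
    rcases mul_eq_zero.1 this with h | h
    · omega
    · exact h
  constructor
  · linear_combination hk + a * b * h5
  · linear_combination 2 * he - a * b * h4

lemma brahm (a b c d e1 k1 : ℤ) (ha : 0 < a) (hb : 0 < b) 
    (h1 : e1 ^ 2 + k1 ^ 2 = a ^ 2 * b ^ 2)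
    (h2 : k1 * (a * b + c * d) = 2 * (a + b + c + d) * (a * b))
    (h3 : 2 * e1 * (a * b + c * d) = a * b * (a ^ 2 + b ^ 2 - c ^ 2 - d ^ 2)) :
    (b + c + d - a) * (a + c + d - b) * (a + b + d - c) * (a + b + c - d)
      = 16 * (a + b + c + d) ^ 2 := by
  have hab : (a * b) ^ 2 ≠ 0 := by positivity
  apply mul_left_cancel₀ hab
  linear_combination (-4 * (a * b + c * d) ^ 2) * h1 +
    4 * (k1 * (a * b + c * d) + 2 * (a + b + c + d) * (a * b)) * h2 +
    (2 * e1 * (a * b + c * d) + a * b * (a ^ 2 + b ^ 2 - c ^ 2 - d ^ 2)) * h3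

/-- The algebraic data of a cyclic equable quadrilateral with sides `u, v, w, z`. -/
structure Good (u1 u2 v1 v2 w1 w2 z1 z2 a b c d : ℤ) : Prop where
  s1 : u1 + v1 + w1 + z1 = 0
  s2 : u2 + v2 + w2 + z2 = 0
  ha : 0 < a
  hb : 0 < b
  hc : 0 < c
  hd : 0 < d
  a2 : u1 ^ 2 + u2 ^ 2 = a ^ 2
  b2 : v1 ^ 2 + v2 ^ 2 = b ^ 2
  c2 : w1 ^ 2 + w2 ^ 2 = c ^ 2
  d2 : z1 ^ 2 + z2 ^ 2 = d ^ 2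
  k1 : 0 < u1 * v2 - u2 * v1
  k2 : 0 < w1 * z2 - w2 * z1
  k3 : 0 < v1 * w2 - v2 * w1
  k4 : 0 < z1 * u2 - z2 * u1
  conc : (u1 * v1 + u2 * v2) * (w1 * z2 - w2 * z1) + (w1 * z1 + w2 * z2) * (u1 * v2 - u2 * v1) = 0
  area : (u1 * v2 - u2 * v1) + (w1 * z2 - w2 * z1) = 2 * (a + b + c + d)

lemma Good.area2 {u1 u2 v1 v2 w1 w2 z1 z2 a b c d : ℤ}
    (h : Good u1 u2 v1 v2 w1 w2 z1 z2 a b c d) :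
    (v1 * w2 - v2 * w1) + (z1 * u2 - z2 * u1) = 2 * (a + b + c + d) := by
  obtain rfl : z1 = -(u1 + v1 + w1) := by linarith [h.s1]
  obtain rfl : z2 = -(u2 + v2 + w2) := by linarith [h.s2]
  linear_combination h.area

lemma Good.conc2 {u1 u2 v1 v2 w1 w2 z1 z2 a b c d : ℤ}
    (h : Good u1 u2 v1 v2 w1 w2 z1 z2 a b c d) :
    (v1 * w1 + v2 * w2) * (z1 * u2 - z2 * u1) + (z1 * u1 + z2 * u2) * (v1 * w2 - v2 * w1) = 0 := by
  have hc := h.conc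
  obtain rfl : z1 = -(u1 + v1 + w1) := by linarith [h.s1]
  obtain rfl : z2 = -(u2 + v2 + w2) := by linarith [h.s2]
  first | linear_combination hc | linear_combination -hc

lemma Good.rot {u1 u2 v1 v2 w1 w2 z1 z2 a b c d : ℤ}
    (h : Good u1 u2 v1 v2 w1 w2 z1 z2 a b c d) : Good v1 v2 w1 w2 z1 z2 u1 u2 b c d a :=
  ⟨by linarith [h.s1], by linarith [h.s2], h.hb, h.hc, h.hd, h.ha, h.b2, h.c2, h.d2, h.a2,
    h.k3, h.k4, h.k2, h.k1, h.conc2, by linarith [h.area2]⟩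

lemma Good.solve {u1 u2 v1 v2 w1 w2 z1 z2 a b c d : ℤ}
    (h : Good u1 u2 v1 v2 w1 w2 z1 z2 a b c d) (hba : b ≤ a) (hca : c ≤ a) (hda : d ≤ a) :
    (a = 4 ∧ u1 * v1 + u2 * v2 = 0 ∧ u1 * v2 - u2 * v1 = 16 ∧ u1 * z1 + u2 * z2 = 0 ∧
      z1 * u2 - z2 * u1 = 16) ∨
    (a = 6 ∧ u1 * v1 + u2 * v2 = 0 ∧ u1 * v2 - u2 * v1 = 18 ∧ u1 * z1 + u2 * z2 = 0 ∧
      z1 * u2 - z2 * u1 = 18) ∨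
    (a = 8 ∧ u1 * v1 + u2 * v2 = -24 ∧ u1 * v2 - u2 * v1 = 32 ∧ u1 * z1 + u2 * z2 = -24 ∧
      z1 * u2 - z2 * u1 = 32) ∨
    (a = 14 ∧ u1 * v1 + u2 * v2 = -56 ∧ u1 * v2 - u2 * v1 = 42 ∧ u1 * z1 + u2 * z2 = -56 ∧
      z1 * u2 - z2 * u1 = 42) := by
  have A1 := cyc_alg a b c d (-(u1 * v1 + u2 * v2)) (u1 * v2 - u2 * v1)
    (-(w1 * z1 + w2 * z2)) (w1 * z2 - w2 * z1) h.ha h.hb h.hc h.hd h.k1 h.k2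
    (by rw [← h.a2, ← h.b2]; ring) (by rw [← h.c2, ← h.d2]; ring) (by linear_combination -h.conc)
    (by
      rw [← h.a2, ← h.b2, ← h.c2, ← h.d2]
      linear_combination (u1 + v1 - w1 - z1) * h.s1 + (u2 + v2 - w2 - z2) * h.s2) h.area
  have A2 := cyc_alg a d b c (-(u1 * z1 + u2 * z2)) (z1 * u2 - z2 * u1)
    (-(v1 * w1 + v2 * w2)) (v1 * w2 - v2 * w1) h.ha h.hd h.hb h.hc h.k4 h.k3
    (by rw [← h.a2, ← h.d2]; ring) (by rw [← h.b2, ← h.c2]; ring) (by linear_combination -h.conc2)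
    (by
      rw [← h.a2, ← h.b2, ← h.c2, ← h.d2]
      linear_combination (u1 + z1 - w1 - v1) * h.s1 + (u2 + z2 - w2 - v2) * h.s2)
    (by linarith [h.area2])
  obtain ⟨A1k, A1e⟩ := A1
  obtain ⟨A2k, A2e⟩ := A2
  have B := brahm a b c d _ _ h.ha h.hb (by rw [← h.a2, ← h.b2]; ring) A1k A1e
  have D := dio a b c d (u1 * v2 - u2 * v1) (z1 * u2 - z2 * u1) h.ha h.hb h.hc h.hd hba hca hda B A1k (by linear_combination A2k)
  generalize u1 * v1 + u2 * v2 = E1 at *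
  generalize u1 * v2 - u2 * v1 = K1 at *
  generalize u1 * z1 + u2 * z2 = E4 at *
  generalize z1 * u2 - z2 * u1 = K4 at *
  rcases D with ⟨rfl, rfl, rfl, rfl⟩ | ⟨rfl, rfl, rfl, rfl⟩ | ⟨rfl, rfl, rfl, rfl⟩ |
    ⟨rfl, rfl, rfl, rfl⟩
  · left; norm_num at *; omega
  · right; left; norm_num at *; omega
  · right; right; left; norm_num at *; omega
  · right; right; right; norm_num at *; omega

/-! ### The isometry -/

/-- The orientation preserving isometry sending `O` to the origin and the direction
`(x, y)` (of length `a`) to the positive first axis. -/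
noncomputable def rotMap (O : ℝ × ℝ) (x y a : ℝ) (p : ℝ × ℝ) : ℝ × ℝ :=
  ((x * (p.1 - O.1) + y * (p.2 - O.2)) / a, (x * (p.2 - O.2) - y * (p.1 - O.1)) / a)

lemma rotMap_isom (O : ℝ × ℝ) (x y a : ℝ) (ha : 0 < a) (h : x ^ 2 + y ^ 2 = a ^ 2) :
    IsIsometry2 (rotMap O x y a) := by
  have ha' : a ≠ 0 := ha.ne'
  constructor
  · rw [Function.bijective_iff_has_inverse]
    refine ⟨fun p => (O.1 + (x * p.1 - y * p.2) / a, O.2 + (x * p.2 + y * p.1) / a), ?_, ?_⟩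
    · intro p
      ext
      · simp only [rotMap]; field_simp; linear_combination (p.1 - O.1) * h
      · simp only [rotMap]; field_simp; linear_combination (p.2 - O.2) * h
    · intro p
      ext
      · simp only [rotMap]; field_simp; linear_combination (p.1) * h
      · simp only [rotMap]; field_simp; linear_combination (p.2) * h
  · intro p q
    unfold dist2 rotMap
    congr 1
    simp only
    field_simp
    linear_combination ((p.1 - q.1) ^ 2 + (p.2 - q.2) ^ 2) * h

/-- The set `S` is congruent to one of the four model quadrilaterals. -/
def Concl (S : Set (ℝ × ℝ)) : Prop :=
    ∃ φ : ℝ × ℝ → ℝ × ℝ, IsIsometry2 φ ∧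
      (φ '' S =
         ({((0 : ℝ), (0 : ℝ)), ((4 : ℝ), (0 : ℝ)), ((4 : ℝ), (4 : ℝ)), ((0 : ℝ), (4 : ℝ))} :
           Set (ℝ × ℝ)) ∨
       φ '' S =
         ({((0 : ℝ), (0 : ℝ)), ((6 : ℝ), (0 : ℝ)), ((6 : ℝ), (3 : ℝ)), ((0 : ℝ), (3 : ℝ))} :
           Set (ℝ × ℝ)) ∨
       φ '' S =
         ({((0 : ℝ), (0 : ℝ)), ((8 : ℝ), (0 : ℝ)), ((5 : ℝ), (4 : ℝ)), ((3 : ℝ), (4 : ℝ))} :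
           Set (ℝ × ℝ)) ∨
       φ '' S =
         ({((0 : ℝ), (0 : ℝ)), ((14 : ℝ), (0 : ℝ)), ((10 : ℝ), (3 : ℝ)), ((4 : ℝ), (3 : ℝ))} :
           Set (ℝ × ℝ)))

lemma rot_image (o1 o2 a1 a2 b1 b2 c1 c2 a E1 K1 E4 K4 : ℤ) (ha : 0 < a)
    (h : (a1 - o1) ^ 2 + (a2 - o2) ^ 2 = a ^ 2)
    (hE1 : (a1 - o1) * (b1 - a1) + (a2 - o2) * (b2 - a2) = E1)
    (hK1 : (a1 - o1) * (b2 - a2) - (a2 - o2) * (b1 - a1) = K1)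
    (hE4 : (a1 - o1) * (o1 - c1) + (a2 - o2) * (o2 - c2) = E4)
    (hK4 : (o1 - c1) * (a2 - o2) - (o2 - c2) * (a1 - o1) = K4) :
    IsIsometry2 (rotMap ((o1 : ℝ), (o2 : ℝ)) (a1 - o1) (a2 - o2) a) ∧
    rotMap ((o1 : ℝ), (o2 : ℝ)) (a1 - o1) (a2 - o2) a ''
      {((o1 : ℝ), (o2 : ℝ)), ((a1 : ℝ), (a2 : ℝ)), ((b1 : ℝ), (b2 : ℝ)), ((c1 : ℝ), (c2 : ℝ))}
    = {((0 : ℝ), (0 : ℝ)), ((a : ℝ), (0 : ℝ)), ((a + E1 / a : ℝ), (K1 / a : ℝ)),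
        ((- E4 / a : ℝ), (K4 / a : ℝ))} := by
  have ha' : (0 : ℝ) < a := by exact_mod_cast ha
  have hR : ((a1 : ℝ) - o1) ^ 2 + ((a2 : ℝ) - o2) ^ 2 = (a : ℝ) ^ 2 := by exact_mod_cast h
  refine ⟨rotMap_isom _ _ _ _ ha' hR, ?_⟩
  have i0 : rotMap ((o1 : ℝ), (o2 : ℝ)) (a1 - o1) (a2 - o2) a ((o1 : ℝ), (o2 : ℝ)) = (0, 0) := by
    simp [rotMap]
  have i1 : rotMap ((o1 : ℝ), (o2 : ℝ)) (a1 - o1) (a2 - o2) a ((a1 : ℝ), (a2 : ℝ))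
      = ((a : ℝ), 0) := by
    ext
    · simp only [rotMap]; field_simp; linear_combination hR
    · simp only [rotMap]; field_simp; ring
  have i2 : rotMap ((o1 : ℝ), (o2 : ℝ)) (a1 - o1) (a2 - o2) a ((b1 : ℝ), (b2 : ℝ))
      = ((a + E1 / a : ℝ), (K1 / a : ℝ)) := by
    rw [← hE1, ← hK1]; push_cast
    ext
    · simp only [rotMap]; field_simp; linear_combination hR
    · simp only [rotMap]; field_simp; ring
  have i3 : rotMap ((o1 : ℝ), (o2 : ℝ)) (a1 - o1) (a2 - o2) a ((c1 : ℝ), (c2 : ℝ))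
      = ((- E4 / a : ℝ), (K4 / a : ℝ)) := by
    rw [← hE4, ← hK4]; push_cast
    ext
    · simp only [rotMap]; field_simp; ring
    · simp only [rotMap]; field_simp; ring
  simp only [Set.image_insert_eq, Set.image_singleton, i0, i1, i2, i3]

lemma concl_of_max (o1 o2 a1 a2 b1 b2 c1 c2 a b c d : ℤ)
    (h : Good (a1 - o1) (a2 - o2) (b1 - a1) (b2 - a2) (c1 - b1) (c2 - b2) (o1 - c1) (o2 - c2)
      a b c d) (hba : b ≤ a) (hca : c ≤ a) (hda : d ≤ a) :
    Concl {((o1 : ℝ), (o2 : ℝ)), ((a1 : ℝ), (a2 : ℝ)), ((b1 : ℝ), (b2 : ℝ)),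
      ((c1 : ℝ), (c2 : ℝ))} := by
  have hs := h.solve hba hca hda
  have hapos := h.ha
  have ha2 := h.a2
  rcases hs with ⟨rfl, e1, k1, e4, k4⟩ | ⟨rfl, e1, k1, e4, k4⟩ | ⟨rfl, e1, k1, e4, k4⟩ |
    ⟨rfl, e1, k1, e4, k4⟩ <;>
  · obtain ⟨I, J⟩ := rot_image o1 o2 a1 a2 b1 b2 c1 c2 _ _ _ _ _ hapos ha2 e1 k1 e4 k4
    refine ⟨_, I, ?_⟩
    rw [J]
    norm_num

lemma rot_set (O A B C : ℝ × ℝ) : ({O, A, B, C} : Set (ℝ × ℝ)) = {A, B, C, O} := by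
  ext x; simp only [Set.mem_insert_iff, Set.mem_singleton_iff]; tauto

lemma concl_of_good (o1 o2 a1 a2 b1 b2 c1 c2 a b c d : ℤ)
    (h : Good (a1 - o1) (a2 - o2) (b1 - a1) (b2 - a2) (c1 - b1) (c2 - b2) (o1 - c1) (o2 - c2)
      a b c d) :
    Concl {((o1 : ℝ), (o2 : ℝ)), ((a1 : ℝ), (a2 : ℝ)), ((b1 : ℝ), (b2 : ℝ)),
      ((c1 : ℝ), (c2 : ℝ))} := by
  have : (b ≤ a ∧ c ≤ a ∧ d ≤ a) ∨ (c ≤ b ∧ d ≤ b ∧ a ≤ b) ∨ (d ≤ c ∧ a ≤ c ∧ b ≤ c) ∨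
      (a ≤ d ∧ b ≤ d ∧ c ≤ d) := by omega
  rcases this with ⟨g1, g2, g3⟩ | ⟨g1, g2, g3⟩ | ⟨g1, g2, g3⟩ | ⟨g1, g2, g3⟩
  · exact concl_of_max _ _ _ _ _ _ _ _ _ _ _ _ h g1 g2 g3
  · rw [rot_set]
    exact concl_of_max _ _ _ _ _ _ _ _ _ _ _ _ h.rot g1 g2 g3
  · rw [rot_set, rot_set]
    exact concl_of_max _ _ _ _ _ _ _ _ _ _ _ _ h.rot.rot g1 g2 g3
  · rw [rot_set, rot_set, rot_set]
    exact concl_of_max _ _ _ _ _ _ _ _ _ _ _ _ h.rot.rot.rot g1 g2 g3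

/-! ### Convexity -/

/-- If two sides' lines have endpoints combined with equal positive total weight at the
same point, the segments meet. -/
lemma seg_meet (p q r s : ℝ × ℝ) (α β γ δ : ℝ) (hα : 0 < α) (hβ : 0 < β) (hγ : 0 < γ) (hδ : 0 < δ)
    (hs : α + β = γ + δ) (h1 : α * p.1 + β * q.1 = γ * r.1 + δ * s.1)
    (h2 : α * p.2 + β * q.2 = γ * r.2 + δ * s.2) : Seg p q ∩ Seg r s ≠ ∅ := by
  rw [← Set.nonempty_iff_ne_empty]
  have hp : 0 < α + β := by positivity
  have hp' : 0 < γ + δ := by positivity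
  refine ⟨(1 - β / (α + β)) • p + (β / (α + β)) • q, ⟨β / (α + β), by positivity, ?_, rfl⟩,
    ⟨δ / (γ + δ), by positivity, ?_, ?_⟩⟩
  · rw [div_le_one hp]; linarith
  · rw [div_le_one hp']; linarith
  · rw [← hs]
    have hγ' : γ = α + β - δ := by linarith
    subst hγ'
    ext
    · simp only [Prod.fst_add, Prod.smul_fst, smul_eq_mul]; field_simp; linear_combination h1
    · simp only [Prod.snd_add, Prod.smul_snd, smul_eq_mul]; field_simp; linear_combination h2

lemma cyc_identity (O A B C P : ℝ × ℝ) 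
    (hA : (P.1 - A.1) ^ 2 + (P.2 - A.2) ^ 2 = (P.1 - O.1) ^ 2 + (P.2 - O.2) ^ 2)
    (hB : (P.1 - B.1) ^ 2 + (P.2 - B.2) ^ 2 = (P.1 - O.1) ^ 2 + (P.2 - O.2) ^ 2)
    (hC : (P.1 - C.1) ^ 2 + (P.2 - C.2) ^ 2 = (P.1 - O.1) ^ 2 + (P.2 - O.2) ^ 2) :
    cross B C O * ((A.1 - O.1) ^ 2 + (A.2 - O.2) ^ 2)
      + cross O A B * ((C.1 - O.1) ^ 2 + (C.2 - O.2) ^ 2)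
      = cross C O A * ((B.1 - O.1) ^ 2 + (B.2 - O.2) ^ 2) := by
  unfold cross
  linear_combination ((C.1 - B.1) * (O.2 - B.2) - (C.2 - B.2) * (O.1 - B.1)) * hA
    + ((A.1 - O.1) * (B.2 - O.2) - (A.2 - O.2) * (B.1 - O.1)) * hC
    - ((O.1 - C.1) * (A.2 - C.2) - (O.2 - C.2) * (A.1 - C.1)) * hB

lemma sq_pos_of_cross {p q r : ℝ × ℝ} (h : cross p q r ≠ 0) :
    0 < (q.1 - p.1) ^ 2 + (q.2 - p.2) ^ 2 := by
  rcases eq_or_ne (q.1 - p.1) 0 with h1 | h1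
  · rcases eq_or_ne (q.2 - p.2) 0 with h2 | h2
    · exact absurd (by simp [cross, h1, h2]) h
    · positivity
  · positivity

lemma convex_of_simple (O A B C P : ℝ × ℝ) (hq : IsQuad O A B C)
    (hA : (P.1 - A.1) ^ 2 + (P.2 - A.2) ^ 2 = (P.1 - O.1) ^ 2 + (P.2 - O.2) ^ 2)
    (hB : (P.1 - B.1) ^ 2 + (P.2 - B.2) ^ 2 = (P.1 - O.1) ^ 2 + (P.2 - O.2) ^ 2)
    (hC : (P.1 - C.1) ^ 2 + (P.2 - C.2) ^ 2 = (P.1 - O.1) ^ 2 + (P.2 - O.2) ^ 2) :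
    0 < cross O A B ∧ 0 < cross B C O ∧ 0 < cross A B C ∧ 0 < cross C O A := by
  obtain ⟨⟨n1, n3, n2, n4, hS1, hS2, -⟩, hpos⟩ := hq
  unfold Collinear3 at n1 n2 n3 n4
  have I0 := cyc_identity O A B C P hA hB hC
  have I1 := cyc_identity A B C O P (by linarith) (by linarith) (by linarith)
  have I2 := cyc_identity B C O A P (by linarith) (by linarith) (by linarith)
  have I3 := cyc_identity C O A B P (by linarith) (by linarith) (by linarith)
  have E1 : cross O A B + cross B C O = shoelace O A B C := by unfold cross shoelace; ring
  have E2 : cross A B C + cross C O A = shoelace O A B C := by unfold cross shoelace; ring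
  have X : cross A B C * O.1 + cross C O A * B.1 = cross B C O * A.1 + cross O A B * C.1 := by
    unfold cross; ring
  have Y : cross A B C * O.2 + cross C O A * B.2 = cross B C O * A.2 + cross O A B * C.2 := by
    unfold cross; ring
  have q1 := sq_pos_of_cross n1
  have q2 := sq_pos_of_cross n2
  have q3 := sq_pos_of_cross n3
  have q4 := sq_pos_of_cross n4
  have dOB : 0 < (B.1 - O.1) ^ 2 + (B.2 - O.2) ^ 2 := by
    have : cross O B A ≠ 0 := by
      intro h; apply n1; unfold cross at *; linarith
    exact sq_pos_of_cross this
  have dAC : 0 < (C.1 - A.1) ^ 2 + (C.2 - A.2) ^ 2 := by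
    have : cross A C B ≠ 0 := by
      intro h; apply n3; unfold cross at *; linarith
    exact sq_pos_of_cross this
  generalize cross O A B = k1 at *
  generalize cross B C O = k2 at *
  generalize cross A B C = k3 at *
  generalize cross C O A = k4 at *
  have dOB' : (O.1 - B.1) ^ 2 + (O.2 - B.2) ^ 2 = (B.1 - O.1) ^ 2 + (B.2 - O.2) ^ 2 := by ring
  have dAC' : (A.1 - C.1) ^ 2 + (A.2 - C.2) ^ 2 = (C.1 - A.1) ^ 2 + (C.2 - A.2) ^ 2 := by ring
  have dOA : (O.1 - A.1) ^ 2 + (O.2 - A.2) ^ 2 = (A.1 - O.1) ^ 2 + (A.2 - O.2) ^ 2 := by ring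
  have dAB : (A.1 - B.1) ^ 2 + (A.2 - B.2) ^ 2 = (B.1 - A.1) ^ 2 + (B.2 - A.2) ^ 2 := by ring
  have dBC : (B.1 - C.1) ^ 2 + (B.2 - C.2) ^ 2 = (C.1 - B.1) ^ 2 + (C.2 - B.2) ^ 2 := by ring
  have dCO : (C.1 - O.1) ^ 2 + (C.2 - O.2) ^ 2 = (O.1 - C.1) ^ 2 + (O.2 - C.2) ^ 2 := by ring
  rw [dCO] at I0
  rw [dOA, ] at I1
  rw [dAB, dOB'] at I2
  rw [dBC, dAC'] at I3
  by_cases c12 : 0 < k1 ∧ 0 < k2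
  · obtain ⟨p1, p2⟩ := c12
    refine ⟨p1, p2, ?_, ?_⟩
    · exact pos_of_mul_pos_left (I2 ▸ (by positivity)) dOB.le
    · exact pos_of_mul_pos_left (I0 ▸ (by positivity)) dOB.le
  by_cases c34 : 0 < k3 ∧ 0 < k4
  · obtain ⟨p1, p2⟩ := c34
    refine ⟨?_, ?_, p1, p2⟩
    · exact pos_of_mul_pos_left (I1 ▸ (by positivity)) dAC.le
    · exact pos_of_mul_pos_left (I3 ▸ (by positivity)) dAC.le
  exfalso
  rcases lt_or_gt_of_ne n1 with m1 | m1
  · have m2 : 0 < k2 := by linarith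
    rcases lt_or_gt_of_ne n3 with m3 | m3
    · exact seg_meet O A B C (-k3) k2 k4 (-k1) (by linarith) m2 (by linarith) (by linarith)
        (by linarith) (by linarith) (by linarith) hS1
    · have m4 : k4 < 0 := lt_of_le_of_ne (not_lt.1 fun h => c34 ⟨m3, h⟩) n4
      exact seg_meet A B C O k2 (-k4) (-k1) k3 (by linarith) (by linarith) (by linarith)
        (by linarith) (by linarith) (by linarith) (by linarith) hS2
  · have m2 : k2 < 0 := lt_of_le_of_ne (not_lt.1 fun h => c12 ⟨m1, h⟩) n2
    rcases lt_or_gt_of_ne n3 with m3 | m3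
    · exact seg_meet A B C O (-k2) k4 k1 (-k3) (by linarith) (by linarith) (by linarith)
        (by linarith) (by linarith) (by linarith) (by linarith) hS2
    · have m4 : k4 < 0 := lt_of_le_of_ne (not_lt.1 fun h => c34 ⟨m3, h⟩) n4
      exact seg_meet O A B C k3 (-k2) (-k4) k1 (by linarith) (by linarith) (by linarith)
        (by linarith) (by linarith) (by linarith) (by linarith) hS1

lemma dist2_sq (p q : ℝ × ℝ) : dist2 p q ^ 2 = (p.1 - q.1) ^ 2 + (p.2 - q.2) ^ 2 := by
  unfold dist2
  exact Real.sq_sqrt (by positivity)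

lemma dist2_nonneg (p q : ℝ × ℝ) : 0 ≤ dist2 p q := Real.sqrt_nonneg _

lemma sides_int (a b c d : ℝ) (na nb nc nd k : ℤ) (ha : a ^ 2 = na) (hb : b ^ 2 = nb)
    (hc : c ^ 2 = nc) (hd : d ^ 2 = nd) (a0 : 0 ≤ a) (b0 : 0 ≤ b) (c0 : 0 ≤ c) (d0 : 0 ≤ d)
    (h : a + b + c + d = (k : ℝ) / 2) : ∃ m : ℤ, a = m := by
  apply int_of_sq a na ha
  exact not_irr a b c d na nb nc nd (k / 2) (by exact_mod_cast ha) (by exact_mod_cast hb)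
    (by exact_mod_cast hc) (by exact_mod_cast hd) a0 b0 c0 d0 (by rw [h]; push_cast; ring)

/-- up to isometries of the plane, there are exactly four cyclic
lattice equable quadrilaterals. -/
theorem cyclic_lattice_equable_quadrilaterals (O A B C : ℝ × ℝ)
    (hquad : IsQuad O A B C)
    (hlat : IsLatticePt O ∧ IsLatticePt A ∧ IsLatticePt B ∧ IsLatticePt C)
    (hequable : quadArea O A B C = quadPerim O A B C)
    (hcyclic : ∃ (P : ℝ × ℝ) (r : ℝ),
      dist2 P O = r ∧ dist2 P A = r ∧ dist2 P B = r ∧ dist2 P C = r) :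
    ∃ φ : ℝ × ℝ → ℝ × ℝ, IsIsometry2 φ ∧
      (φ '' {O, A, B, C} =
         ({((0 : ℝ), (0 : ℝ)), ((4 : ℝ), (0 : ℝ)), ((4 : ℝ), (4 : ℝ)), ((0 : ℝ), (4 : ℝ))} :
           Set (ℝ × ℝ)) ∨
       φ '' {O, A, B, C} =
         ({((0 : ℝ), (0 : ℝ)), ((6 : ℝ), (0 : ℝ)), ((6 : ℝ), (3 : ℝ)), ((0 : ℝ), (3 : ℝ))} :
           Set (ℝ × ℝ)) ∨
       φ '' {O, A, B, C} =
         ({((0 : ℝ), (0 : ℝ)), ((8 : ℝ), (0 : ℝ)), ((5 : ℝ), (4 : ℝ)), ((3 : ℝ), (4 : ℝ))} :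
           Set (ℝ × ℝ)) ∨
       φ '' {O, A, B, C} =
         ({((0 : ℝ), (0 : ℝ)), ((14 : ℝ), (0 : ℝ)), ((10 : ℝ), (3 : ℝ)), ((4 : ℝ), (3 : ℝ))} :
           Set (ℝ × ℝ))) := by
  change Concl {O, A, B, C}
  obtain ⟨P, r, rO, rA, rB, rC⟩ := hcyclic
  have PO := dist2_sq P O
  have PA := dist2_sq P A
  have PB := dist2_sq P B
  have PC := dist2_sq P C
  rw [rO] at PO
  rw [rA] at PA
  rw [rB] at PB
  rw [rC] at PC
  have hA := PA.symm.trans PO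
  have hB := PB.symm.trans PO
  have hC := PC.symm.trans PO
  obtain ⟨c1, c2, c3, c4⟩ := convex_of_simple O A B C P hquad hA hB hC
  have I0 := cyc_identity O A B C P hA hB hC
  have hpos := hquad.2
  unfold quadArea quadPerim at hequable
  rw [abs_of_pos hpos] at hequable
  have p1 := sq_pos_of_cross c1.ne'
  have p2 := sq_pos_of_cross c2.ne'
  have p3 := sq_pos_of_cross c3.ne'
  have p4 := sq_pos_of_cross c4.ne'
  obtain ⟨⟨o1, o2, rfl⟩, ⟨a1, a2, rfl⟩, ⟨b1, b2, rfl⟩, ⟨d1, d2, rfl⟩⟩ := hlat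
  have sa := dist2_sq ((o1 : ℝ), (o2 : ℝ)) ((a1 : ℝ), (a2 : ℝ))
  have sb := dist2_sq ((a1 : ℝ), (a2 : ℝ)) ((b1 : ℝ), (b2 : ℝ))
  have sc := dist2_sq ((b1 : ℝ), (b2 : ℝ)) ((d1 : ℝ), (d2 : ℝ))
  have sd := dist2_sq ((d1 : ℝ), (d2 : ℝ)) ((o1 : ℝ), (o2 : ℝ))
  have na := dist2_nonneg ((o1 : ℝ), (o2 : ℝ)) ((a1 : ℝ), (a2 : ℝ))
  have nb := dist2_nonneg ((a1 : ℝ), (a2 : ℝ)) ((b1 : ℝ), (b2 : ℝ))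
  have nc := dist2_nonneg ((b1 : ℝ), (b2 : ℝ)) ((d1 : ℝ), (d2 : ℝ))
  have nd := dist2_nonneg ((d1 : ℝ), (d2 : ℝ)) ((o1 : ℝ), (o2 : ℝ))
  generalize dist2 ((o1 : ℝ), (o2 : ℝ)) ((a1 : ℝ), (a2 : ℝ)) = a at *
  generalize dist2 ((a1 : ℝ), (a2 : ℝ)) ((b1 : ℝ), (b2 : ℝ)) = b at *
  generalize dist2 ((b1 : ℝ), (b2 : ℝ)) ((d1 : ℝ), (d2 : ℝ)) = c at *
  generalize dist2 ((d1 : ℝ), (d2 : ℝ)) ((o1 : ℝ), (o2 : ℝ)) = d at *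
  simp only [shoelace, cross] at *
  obtain ⟨k, hk⟩ : ∃ k : ℤ, k = (o1 * a2 - a1 * o2) + (a1 * b2 - b1 * a2) +
    (b1 * d2 - d1 * b2) + (d1 * o2 - o1 * d2) := ⟨_, rfl⟩
  have hk' : (k : ℝ) = (o1 * a2 - a1 * o2) + (a1 * b2 - b1 * a2) +
    (b1 * d2 - d1 * b2) + (d1 * o2 - o1 * d2) := by rw [hk]; push_cast; ring
  rw [← hk'] at hequable
  have sa' : a ^ 2 = (((o1 - a1) ^ 2 + (o2 - a2) ^ 2 : ℤ) : ℝ) := by push_cast; exact sa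
  have sb' : b ^ 2 = (((a1 - b1) ^ 2 + (a2 - b2) ^ 2 : ℤ) : ℝ) := by push_cast; exact sb
  have sc' : c ^ 2 = (((b1 - d1) ^ 2 + (b2 - d2) ^ 2 : ℤ) : ℝ) := by push_cast; exact sc
  have sd' : d ^ 2 = (((d1 - o1) ^ 2 + (d2 - o2) ^ 2 : ℤ) : ℝ) := by push_cast; exact sd
  obtain ⟨ma, rfl⟩ := sides_int a b c d _ _ _ _ k sa' sb' sc' sd' na nb nc nd (by linarith)
  obtain ⟨mb, rfl⟩ := sides_int b _ c d _ _ _ _ k sb' sa' sc' sd' nb na nc nd (by linarith)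
  obtain ⟨mc, rfl⟩ := sides_int c _ _ d _ _ _ _ k sc' sb' sa' sd' nc nb na nd (by linarith)
  obtain ⟨md, rfl⟩ := sides_int d _ _ _ _ _ _ _ k sd' sb' sc' sa' nd nb nc na (by linarith)
  clear hquad
  have na' : 0 ≤ ma := by exact_mod_cast na
  have nb' : 0 ≤ mb := by exact_mod_cast nb
  have nc' : 0 ≤ mc := by exact_mod_cast nc
  have nd' : 0 ≤ md := by exact_mod_cast nd
  have ta : ma ^ 2 = (o1 - a1) ^ 2 + (o2 - a2) ^ 2 := by exact_mod_cast sa'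
  have tb : mb ^ 2 = (a1 - b1) ^ 2 + (a2 - b2) ^ 2 := by exact_mod_cast sb'
  have tc : mc ^ 2 = (b1 - d1) ^ 2 + (b2 - d2) ^ 2 := by exact_mod_cast sc'
  have td : md ^ 2 = (d1 - o1) ^ 2 + (d2 - o2) ^ 2 := by exact_mod_cast sd'
  have hkk : k = 2 * (ma + mb + mc + md) := by
    have : (k : ℝ) = 2 * (ma + mb + mc + md) := by linarith
    exact_mod_cast this
  norm_cast at p1 p2 p3 p4 c1 c2 c3 c4 I0
  apply concl_of_good _ _ _ _ _ _ _ _ ma mb mc md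
  have posof : ∀ m : ℤ, 0 ≤ m → 0 < m ^ 2 → 0 < m := fun m h0 h1 =>
    lt_of_le_of_ne h0 (by rintro rfl; norm_num at h1)
  refine ⟨by ring, by ring, ?_, ?_, ?_, ?_, by rw [ta]; ring, by rw [tb]; ring, by rw [tc]; ring,
    by rw [td]; ring, by linarith, by linarith, by linarith, by linarith, ?_, ?_⟩
  · exact posof _ na' (by linarith)
  · exact posof _ nb' (by linarith)
  · exact posof _ nc' (by linarith)
  · exact posof _ nd' (by linarith)
  · first | linear_combination I0 | linear_combination -I0
  · rw [← hkk, hk]; ring
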